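/- Let p be a prime, k a field of characteristic p (more generally any commutative ring in which p·1 = 0), and M a k-module. Let T = M^{⊗p} be the p-fold tensor power of M over k (the PiTensorProduct over Fin p), and let σ : T → T be the k-linear automorphism induced by the cyclic permutation of the tensor factors (reindexing along i ↦ i+1 in Fin p). Let W ⊆ T be the k-submodule spanned by all elements σt − t with t ∈ T. Then for all e, f ∈ M, the element (e+f)^{⊗p} − e^{⊗p} − f^{⊗p} lies in W; consequently the map M → T/W sending e to the class of e^{⊗p} is additive (and it satisfies (c·e)^{⊗p} = c^p · e^{⊗p} for c ∈ k, so it is semilinear with respect to the Frobenius of k). -/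

import Mathlib

/-!
Expanding `(e + f)^{⊗p}` multilinearly gives one elementary tensor for each subset `s` of the
index set, with `e` in the positions of `s` and `f` elsewhere. The cyclic group permutes these
terms, and modulo `σ t - t` the terms of an orbit are equal. The group has `p`-power order and
`p = 0` in `k`, so only the subsets fixed by the rotation contribute, and by transitivity these are
the empty set and the whole index set.
-/

open MulAction
open scoped Pointwise

section PGroupSums

variable {p : ℕ} [Fact p.Prime] {G X N : Type*} [Group G] [MulAction G X]

theorem card_fiber_modEq_card_fixedPoints_fiber [Finite X] (hG : IsPGroup p G) {F : X → N}
    (hF : ∀ (g : G) x, F (g • x) = F x) (a : N) :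
    Nat.card {x // F x = a} ≡ Nat.card {x : fixedPoints G X // F x = a} [MOD p] := by
  let fiber : SubMulAction G X := ⟨{x | F x = a}, fun g x hx => (hF g x).trans hx⟩
  have fixedPointsEquiv : fixedPoints G fiber ≃ {x : fixedPoints G X // F x = a} :=
    { toFun x := ⟨⟨x.1, fun g => congrArg Subtype.val (x.2 g)⟩, x.1.2⟩
      invFun x := ⟨⟨x.1, x.2⟩, fun g => Subtype.ext (x.1.2 g)⟩ }
  rw [← Nat.card_congr fixedPointsEquiv]
  exact hG.card_modEq_card_fixedPoints fiber

theorem sum_eq_sum_fixedPoints_of_isPGroup [Fintype X] [Fintype (fixedPoints G X)]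
    [AddCommMonoid N] (hG : IsPGroup p G) (hN : ∀ a : N, p • a = 0) {F : X → N}
    (hF : ∀ (g : G) x, F (g • x) = F x) :
    ∑ x, F x = ∑ x : fixedPoints G X, F x := by
  classical
  have sum_eq_sum_card_nsmul {Y : Type _} [Fintype Y] (φ : Y → X) :
      ∑ y, F (φ y) = ∑ a ∈ Finset.univ.image F, Nat.card {y // F (φ y) = a} • a := by
    rw [← Finset.sum_fiberwise_of_maps_to (t := Finset.univ.image F) (g := F ∘ φ) (by simp)]
    refine Finset.sum_congr rfl fun a _ => ?_
    rw [Finset.sum_eq_card_nsmul (b := a) (by simp), Nat.card_eq_fintype_card,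
      Fintype.card_subtype]
    rfl
  calc ∑ x, F x = ∑ a ∈ Finset.univ.image F, Nat.card {x // F x = a} • a :=
        sum_eq_sum_card_nsmul id
    _ = ∑ a ∈ Finset.univ.image F, Nat.card {x : fixedPoints G X // F x = a} • a :=
        Finset.sum_congr rfl fun a _ =>
          nsmul_eq_nsmul_of_modEq (card_fiber_modEq_card_fixedPoints_fiber hG hF a) (hN a)
    _ = ∑ x : fixedPoints G X, F x := (sum_eq_sum_card_nsmul Subtype.val).symm

end PGroupSums

theorem mem_fixedPoints_finset_iff {G ι : Type*} [Group G] [MulAction G ι] [IsPretransitive G ι]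
    [Fintype ι] [DecidableEq ι] {s : Finset ι} :
    s ∈ fixedPoints G (Finset ι) ↔ s = ∅ ∨ s = Finset.univ := by
  constructor
  · refine fun hs => s.eq_empty_or_nonempty.imp_right fun ⟨i, hi⟩ =>
      Finset.eq_univ_iff_forall.2 fun j => ?_
    obtain ⟨g, rfl⟩ := exists_smul_eq G i j
    exact hs g ▸ Finset.smul_mem_smul_finset hi
  · rintro (rfl | rfl) g
    · exact Finset.smul_finset_empty g
    · exact Finset.smul_finset_univ

theorem multilinearMap_const_add_of_isPGroup {p : ℕ} [Fact p.Prime] {G ι R M N : Type*} [Group G]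
    [MulAction G ι] [IsPretransitive G ι] [Finite ι] [Nonempty ι] [Semiring R] [AddCommMonoid M]
    [Module R M] [AddCommMonoid N] [Module R N] (hG : IsPGroup p G) (hN : ∀ a : N, p • a = 0)
    (F : MultilinearMap R (fun _ : ι => M) N)
    (hF : ∀ (g : G) (m : ι → M), F (fun i => m (g • i)) = F m) (x y : M) :
    F (fun _ => x + y) = F (fun _ => x) + F (fun _ => y) := by
  classical
  have := Fintype.ofFinite ι
  let term (s : Finset ι) : N := F (s.piecewise (fun _ => x) (fun _ => y))
  have term_smul (g : G) (s : Finset ι) : term (g • s) = term s :=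
    calc term (g • s) = F (fun i => s.piecewise (fun _ => x) (fun _ => y) (g⁻¹ • i)) :=
          congrArg F (funext fun i => by simp only [Finset.piecewise, Finset.inv_smul_mem_iff])
      _ = term s := hF g⁻¹ _
  calc F (fun _ => x + y) = ∑ s, term s := F.map_add_univ (fun _ => x) (fun _ => y)
    _ = ∑ s : fixedPoints G (Finset ι), term s :=
        sum_eq_sum_fixedPoints_of_isPGroup hG hN term_smul
    _ = ∑ s ∈ {Finset.univ, ∅}, term s :=
        (Finset.sum_subtype _ (fun s => by
          rw [mem_fixedPoints_finset_iff, Finset.mem_insert, Finset.mem_singleton, or_comm])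
          term).symm
    _ = F (fun _ => x) + F (fun _ => y) := by
        rw [Finset.sum_pair Finset.univ_nonempty.ne_empty]
        simp only [term, Finset.piecewise_univ, Finset.piecewise_empty]

theorem isPGroup_zpowers_of_pow_eq_one {p n : ℕ} {G : Type*} [Group G] {g : G}
    (hg : g ^ p ^ n = 1) : IsPGroup p (Subgroup.zpowers g) := by
  rintro ⟨_, j, rfl⟩
  refine ⟨n, Subtype.ext ?_⟩
  change (g ^ j) ^ p ^ n = 1
  rw [← zpow_natCast, zpow_comm, zpow_natCast, hg, one_zpow]

section Cycles

variable {ι : Type*} {τ : Equiv.Perm ι}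

theorem isPretransitive_zpowers_of_isCycleOn_univ (hτ : τ.IsCycleOn Set.univ) :
    IsPretransitive (Subgroup.zpowers τ) ι where
  exists_smul_eq i j :=
    let ⟨n, hn⟩ := hτ.2 (Set.mem_univ i) (Set.mem_univ j)
    ⟨⟨τ ^ n, n, rfl⟩, hn⟩

theorem pow_card_eq_one_of_isCycleOn_univ [Fintype ι] (hτ : τ.IsCycleOn Set.univ) :
    τ ^ Fintype.card ι = 1 := by
  rw [← Finset.coe_univ] at hτ
  exact Equiv.ext fun i => hτ.pow_card_apply (Finset.mem_univ i)

theorem apply_comp_eq_of_mem_zpowers {α β : Type*} {F : (ι → α) → β}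
    (hF : ∀ m, F (m ∘ τ) = F m) {g : Equiv.Perm ι} (hg : g ∈ Subgroup.zpowers τ) (m : ι → α) :
    F (m ∘ g) = F m := by
  rw [Subgroup.zpowers_eq_closure] at hg
  induction hg using Subgroup.closure_induction generalizing m with
  | mem g hg => exact Set.mem_singleton_iff.1 hg ▸ hF m
  | one => rfl
  | mul g h _ _ ihg ihh => exact (ihh (m ∘ g)).trans (ihg m)
  | inv g _ ih => simpa [Function.comp_assoc] using (ih (m ∘ ⇑g⁻¹)).symm

end Cycles

theorem isCycleOn_finRotate (n : ℕ) : (finRotate n).IsCycleOn Set.univ := by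
  match n with
  | 0 | 1 => exact Equiv.Perm.isCycleOn_of_subsingleton _ _
  | n + 2 => simpa using (isCycle_finRotate (n := n)).isCycleOn

theorem multilinearMap_const_add_of_isCycleOn {p n : ℕ} [Fact p.Prime] {ι R M N : Type*}
    [Fintype ι] [Semiring R] [AddCommMonoid M] [Module R M] [AddCommMonoid N] [Module R N]
    (hι : Fintype.card ι = p ^ n) {τ : Equiv.Perm ι} (hτ : τ.IsCycleOn Set.univ)
    (hN : ∀ a : N, p • a = 0) (F : MultilinearMap R (fun _ : ι => M) N)
    (hF : ∀ m, F (m ∘ τ) = F m) (x y : M) :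
    F (fun _ => x + y) = F (fun _ => x) + F (fun _ => y) := by
  have : Nonempty ι := Fintype.card_pos_iff.1 (hι ▸ pow_pos (Fact.out : p.Prime).pos n)
  have := isPretransitive_zpowers_of_isCycleOn_univ hτ
  have hpow : τ ^ p ^ n = 1 := hι ▸ pow_card_eq_one_of_isCycleOn_univ hτ
  exact multilinearMap_const_add_of_isPGroup (isPGroup_zpowers_of_pow_eq_one hpow) hN F
    (fun g => apply_comp_eq_of_mem_zpowers hF g.2) x y

theorem stmt_11_general {p n : ℕ} (hp : p.Prime) {k : Type*} [CommRing k] (hpk : (p : k) = 0)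
    {M : Type*} [AddCommGroup M] [Module k M] {ι : Type*} [Fintype ι]
    (hι : Fintype.card ι = p ^ n) {τ : Equiv.Perm ι} (hτ : τ.IsCycleOn Set.univ)
    (σ : PiTensorProduct k (fun _ : ι => M) →ₗ[k] PiTensorProduct k (fun _ : ι => M))
    (hσ : ∀ m : ι → M,
      σ (PiTensorProduct.tprod k m) = PiTensorProduct.tprod k (m ∘ τ)) :
    (∀ e f : M,
      PiTensorProduct.tprod k (fun _ : ι => e + f)
          - PiTensorProduct.tprod k (fun _ : ι => e)
          - PiTensorProduct.tprod k (fun _ : ι => f)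
        ∈ Submodule.span k {x | ∃ t, x = σ t - t}) ∧
    (∀ e f : M,
      (Submodule.Quotient.mk (PiTensorProduct.tprod k (fun _ : ι => e + f)) :
          PiTensorProduct k (fun _ : ι => M) ⧸
            Submodule.span k {x | ∃ t, x = σ t - t})
        = Submodule.Quotient.mk (PiTensorProduct.tprod k (fun _ : ι => e))
          + Submodule.Quotient.mk (PiTensorProduct.tprod k (fun _ : ι => f))) ∧
    (∀ (c : k) (e : M),
      (Submodule.Quotient.mk (PiTensorProduct.tprod k (fun _ : ι => c • e)) :
          PiTensorProduct k (fun _ : ι => M) ⧸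
            Submodule.span k {x | ∃ t, x = σ t - t})
        = c ^ Fintype.card ι • Submodule.Quotient.mk
            (PiTensorProduct.tprod k (fun _ : ι => e))) := by
  have : Fact p.Prime := ⟨hp⟩
  let W : Submodule k (PiTensorProduct k fun _ : ι => M) := .span k {x | ∃ t, x = σ t - t}
  let F : MultilinearMap k (fun _ : ι => M) ((PiTensorProduct k fun _ : ι => M) ⧸ W) :=
    W.mkQ.compMultilinearMap (PiTensorProduct.tprod k)
  have nsmul_eq_zero (a : (PiTensorProduct k fun _ : ι => M) ⧸ W) : p • a = 0 := by
    rw [← Nat.cast_smul_eq_nsmul k, hpk, zero_smul]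
  have F_comp (m : ι → M) : F (m ∘ τ) = F m :=
    (Submodule.Quotient.eq W).2 (Submodule.subset_span ⟨PiTensorProduct.tprod k m, by rw [hσ]⟩)
  have F_add (e f : M) : F (fun _ => e + f) = F (fun _ => e) + F (fun _ => f) :=
    multilinearMap_const_add_of_isCycleOn hι hτ nsmul_eq_zero F F_comp e f
  have F_smul (c : k) (e : M) : F (fun _ => c • e) = c ^ Fintype.card ι • F (fun _ => e) := by
    rw [F.map_smul_univ (fun _ => c), Finset.prod_const, Finset.card_univ]
  refine ⟨fun e f => ?_, F_add, F_smul⟩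
  rw [sub_sub]
  exact (Submodule.Quotient.eq W).1 (F_add e f)

/-- Additivity and semilinearity of the map `C : M → (M^{⊗p})_σ`, `e ↦ e^{⊗p}`, used
in the non-commutative Cartier isomorphism: over a commutative ring `k` with
`p · 1 = 0`, if `σ` is the cyclic permutation of the `p`-fold tensor power
`T = M^{⊗p}` and `W ⊆ T` is the `k`-submodule spanned by the elements `σ t - t`,
then `(e + f)^{⊗p} - e^{⊗p} - f^{⊗p} ∈ W` for all `e, f ∈ M`; consequently
`e ↦ [e^{⊗p}] ∈ T/W` is additive, and it satisfies `(c • e)^{⊗p} = c^p • e^{⊗p}`. -/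
theorem stmt_11 (p : ℕ) (hp : p.Prime) (k : Type) [CommRing k] (hpk : (p : k) = 0)
    (M : Type) [AddCommGroup M] [Module k M]
    (σ : PiTensorProduct k (fun _ : Fin p => M) →ₗ[k]
      PiTensorProduct k (fun _ : Fin p => M))
    (hσ : ∀ m : Fin p → M,
      σ (PiTensorProduct.tprod k m) = PiTensorProduct.tprod k (m ∘ finRotate p)) :
    (∀ e f : M,
      PiTensorProduct.tprod k (fun _ : Fin p => e + f)
          - PiTensorProduct.tprod k (fun _ : Fin p => e)
          - PiTensorProduct.tprod k (fun _ : Fin p => f)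
        ∈ Submodule.span k {x | ∃ t, x = σ t - t}) ∧
    (∀ e f : M,
      (Submodule.Quotient.mk (PiTensorProduct.tprod k (fun _ : Fin p => e + f)) :
          PiTensorProduct k (fun _ : Fin p => M) ⧸
            Submodule.span k {x | ∃ t, x = σ t - t})
        = Submodule.Quotient.mk (PiTensorProduct.tprod k (fun _ : Fin p => e))
          + Submodule.Quotient.mk (PiTensorProduct.tprod k (fun _ : Fin p => f))) ∧
    (∀ (c : k) (e : M),
      (Submodule.Quotient.mk (PiTensorProduct.tprod k (fun _ : Fin p => c • e)) :
          PiTensorProduct k (fun _ : Fin p => M) ⧸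
            Submodule.span k {x | ∃ t, x = σ t - t})
        = c ^ p • Submodule.Quotient.mk
            (PiTensorProduct.tprod k (fun _ : Fin p => e))) := by
  simpa only [Fintype.card_fin] using
    stmt_11_general (n := 1) hp hpk (by simp) (isCycleOn_finRotate p) σ hσ
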